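/- arXiv:2409.16906 — 2 statements merged into one kernel-verified Lean document; each statement's English description precedes it below -/
import Mathlib

section
/- Let A_ρ ⊆ M_n be a structural matrix algebra and g : ρ → ℂ* a transitive map such that the induced automorphism g* : A_ρ → A_ρ preserves the rank of every matrix in A_ρ. Then g is trivial, i.e., there exists s : {1,...,n} → ℂ* with g(i,j) = s(i)/s(j) for all (i,j) ∈ ρ. -/
open Matrix

/-!
Read `ρ` as the edge set of a bipartite graph between rows and columns, and suppose that
`G i j = s i / t j` has been achieved on a set `E` of edges; after rescaling rows and columns,
`G = 1` on `E`. Let `(a, b)` be a further edge. If `E` does not connect row `a` to column `b`,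
rescale the component of `a` to make `G a b = 1`. If it does, a unit flow from `a` to `b` along `E`
is a matrix `Y` supported on `E` with row sums `e_a` and column sums `e_b`, so all row and column
sums of `D = Y - E_ab` vanish. The multiplier only adds `(1 - G a b) E_ab` to `D`, and this raises
the rank unless `G a b = 1`.
-/

section Rank

variable {m n K R : Type*} [Fintype n]

theorem rank_lt_rank_add_vecMulVec [Fintype m] [Field K] {A : Matrix m n K} {x w : m → K}
    {y u : n → K} (hu : A *ᵥ u = 0) (hw : w ᵥ* A = 0) (hyu : y ⬝ᵥ u ≠ 0)
    (hwx : w ⬝ᵥ x ≠ 0) :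
    A.rank < (A + vecMulVec x y).rank := by
  have mulVec_update (v : n → K) : (A + vecMulVec x y) *ᵥ v = A *ᵥ v + (y ⬝ᵥ v) • x := by
    rw [add_mulVec, vecMulVec_mulVec, op_smul_eq_smul]
  have ker_lt : LinearMap.ker (A + vecMulVec x y).mulVecLin < LinearMap.ker A.mulVecLin := by
    simp only [SetLike.lt_iff_le_and_exists, SetLike.le_def, LinearMap.mem_ker, mulVecLin_apply,
      mulVec_update]
    refine ⟨fun v hv => ?_, u, hu, fun hu' => ?_⟩
    · have hyv : y ⬝ᵥ v = 0 := by
        simpa [dotProduct_mulVec, hw, hwx] using congrArg (w ⬝ᵥ ·) hv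
      simpa [hyv] using hv
    · have hx : x = 0 := by simpa [hu, hyu] using hu'
      simp [hx] at hwx
  have finrank_ker_lt := Submodule.finrank_lt_finrank_of_lt ker_lt
  have rank_nullity (B : Matrix m n K) :
      B.rank + Module.finrank K (LinearMap.ker B.mulVecLin) = Module.finrank K (n → K) :=
    B.mulVecLin.finrank_range_add_finrank_ker
  linarith [rank_nullity A, rank_nullity (A + vecMulVec x y)]

theorem rank_lt_rank_add_single [Fintype m] [DecidableEq m] [DecidableEq n] [Field K]
    {A : Matrix m n K} {w : m → K} {u : n → K} {a : m} {b : n} {c : K}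
    (hu : A *ᵥ u = 0) (hw : w ᵥ* A = 0) (hub : u b ≠ 0) (hwa : w a ≠ 0) (hc : c ≠ 0) :
    A.rank < (A + single a b c).rank := by
  have hsingle : single a b c = vecMulVec (Pi.single a c) (Pi.single b 1) := by
    ext i j
    simp only [single_apply, vecMulVec_apply, Pi.single_apply, ite_and, eq_comm, mul_ite, mul_one,
      mul_zero]
    split_ifs <;> rfl
  rw [hsingle]
  exact rank_lt_rank_add_vecMulVec hu hw (by simpa using hub) (by simp [hwa, hc])

theorem rank_vecMulVec_units_hadamard [Finite m] [CommRing R] (s : m → Rˣ) (t : n → Rˣ)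
    (X : Matrix m n R) :
    (vecMulVec (fun i => (s i : R)) (fun j => (t j : R)) ⊙ X).rank = X.rank := by
  classical
  have := Fintype.ofFinite m
  have hdiag : vecMulVec (fun i => (s i : R)) (fun j => (t j : R)) ⊙ X =
      diagonal (fun i => (s i : R)) * X * diagonal (fun j => (t j : R)) := by
    ext i j
    simp only [hadamard_apply, vecMulVec_apply, mul_diagonal, diagonal_mul]
    ring
  have hs : IsUnit (diagonal fun i => (s i : R)).det := by
    simp [det_diagonal]
  have ht : IsUnit (diagonal fun j => (t j : R)).det := by
    simp [det_diagonal]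
  rw [hdiag, rank_mul_eq_left_of_isUnit_det _ _ ht, rank_mul_eq_right_of_isUnit_det _ _ hs]

end Rank

section Pattern

variable {m n R : Type*} [Semiring R]

variable (R) in
/-- The space of matrices whose support lies in `ρ`. For a quasi-order `ρ` on `m = n` it is the
structural matrix algebra `A_ρ`. -/
def patternSpace (ρ : Set (m × n)) : Submodule R (Matrix m n R) where
  carrier := {X | ∀ i j, X i j ≠ 0 → (i, j) ∈ ρ}
  zero_mem' i j h := absurd rfl h
  add_mem' {X Y} hX hY i j h := by
    by_contra hij
    exact h (by simp [not_imp_comm.mp (hX i j) hij, not_imp_comm.mp (hY i j) hij])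
  smul_mem' c X hX i j h := hX i j (right_ne_zero_of_mul h)

theorem patternSpace_mono {E ρ : Set (m × n)} (h : E ⊆ ρ) : patternSpace R E ≤ patternSpace R ρ :=
  fun _ hX i j hij => h (hX i j hij)

theorem single_mem_patternSpace [DecidableEq m] [DecidableEq n] {ρ : Set (m × n)} {i : m} {j : n}
    (h : (i, j) ∈ ρ) (c : R) : single i j c ∈ patternSpace R ρ := by
  intro k l hkl
  obtain ⟨rfl, rfl⟩ : i = k ∧ j = l := by
    by_contra hne
    exact hkl (single_apply_of_ne _ _ _ _ _ hne)
  exact h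

theorem hadamard_single [DecidableEq m] [DecidableEq n] (G : Matrix m n R) (i : m) (j : n) (c : R) :
    G ⊙ single i j c = single i j (G i j * c) := by
  ext k l
  by_cases hkl : i = k ∧ j = l
  · obtain ⟨rfl, rfl⟩ := hkl
    simp
  · simp [single_apply_of_ne _ _ _ _ _ hkl]

theorem hadamard_eq_self_of_mem_patternSpace {E : Set (m × n)} {H X : Matrix m n R}
    (hH : ∀ i j, (i, j) ∈ E → H i j = 1) (hX : X ∈ patternSpace R E) : H ⊙ X = X := by
  ext i j
  by_cases hij : X i j = 0
  · simp [hij]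
  · simp [hH i j (hX i j hij)]

end Pattern

section Marginals

variable {m n R : Type*} [Fintype m] [Fintype n]

/-- The vectors of row sums and of column sums of a matrix. -/
def marginals [CommSemiring R] : Matrix m n R →ₗ[R] (m → R) × (n → R) where
  toFun Y := (Y *ᵥ 1, 1 ᵥ* Y)
  map_add' Y Z := by simp [add_mulVec, vecMul_add]
  map_smul' c Y := by simp [smul_mulVec, vecMul_smul]

theorem marginals_single [DecidableEq m] [DecidableEq n] [CommSemiring R] (i : m) (j : n)
    (c : R) : marginals (single i j c) = (Pi.single i c, Pi.single j c) := by
  ext k <;> simp [marginals, mulVec, vecMul, dotProduct, single_apply, Pi.single_apply, ite_and,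
    eq_comm]

variable (R) in
/-- The pairs of vectors of row and column sums of matrices supported on `E`. It contains
`(e_a, e_b)` precisely when there is a unit flow from row `a` to column `b` along edges in `E`. -/
def patternMarginals [CommSemiring R] (E : Set (m × n)) : Submodule R ((m → R) × (n → R)) :=
  (patternSpace R E).map marginals

theorem single_single_mem_patternMarginals [DecidableEq m] [DecidableEq n] [CommSemiring R]
    {E : Set (m × n)} {i : m} {j : n} (h : (i, j) ∈ E) :
    (Pi.single i 1, Pi.single j 1) ∈ patternMarginals R E :=
  ⟨single i j 1, single_mem_patternSpace h 1, marginals_single i j 1⟩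

theorem exists_separation_of_notMem_patternMarginals [DecidableEq m] [DecidableEq n] [CommRing R]
    {E : Set (m × n)} {a : m} {b : n} (h : (Pi.single a 1, Pi.single b 1) ∉ patternMarginals R E) :
    ∃ (A : Set m) (B : Set n), a ∈ A ∧ b ∉ B ∧ ∀ i j, (i, j) ∈ E → (i ∈ A ↔ j ∈ B) := by
  -- `A` and `B` are the rows and columns of the component of `a`: those that a unit flow along `E`
  -- can reach from row `a`.
  refine ⟨{i | (Pi.single a 1 - Pi.single i 1, 0) ∈ patternMarginals R E},
    {j | (Pi.single a 1, Pi.single j 1) ∈ patternMarginals R E}, ?_, h, fun i j hij => ?_⟩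
  · simpa only [Set.mem_ofPred_eq, sub_self] using! zero_mem (patternMarginals R E)
  · simp only [Set.mem_ofPred_eq]
    rw [← Submodule.add_mem_iff_left _ (single_single_mem_patternMarginals (R := R) hij)]
    simp

end Marginals

section Multiplier

variable {m n K : Type*} [Field K] {ρ E : Set (m × n)} {G : Matrix m n K}

/-- Schur multiplication by `G` preserves the rank of every matrix supported on `ρ`. -/
def PreservesRankOn [Fintype n] (ρ : Set (m × n)) (G : Matrix m n K) : Prop :=
  ∀ X ∈ patternSpace K ρ, (G ⊙ X).rank = X.rank

/-- The multiplier `G` is trivial on `E`: there its entries are the quotients `s i / t j` of nonzero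
scalars attached to the rows and columns. For `m = n` the families `s` and `t` may differ. -/
def IsTrivialOn (E : Set (m × n)) (G : Matrix m n K) : Prop :=
  ∃ (s : m → Kˣ) (t : n → Kˣ), ∀ i j, (i, j) ∈ E → G i j = s i / t j

theorem IsTrivialOn.insert_of_separation (hG : IsTrivialOn E G) {a : m} {b : n}
    (hab : G a b ≠ 0) {A : Set m} {B : Set n} (ha : a ∈ A) (hb : b ∉ B)
    (hAB : ∀ i j, (i, j) ∈ E → (i ∈ A ↔ j ∈ B)) : IsTrivialOn (insert (a, b) E) G := by
  classical
  obtain ⟨s, t, hst⟩ := hG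
  let c : Kˣ := Units.mk0 (G a b) hab * t b / s a
  refine ⟨fun i => if i ∈ A then c * s i else s i, fun j => if j ∈ B then c * t j else t j, ?_⟩
  rintro i j (hij | hij)
  · obtain ⟨rfl, rfl⟩ := Prod.mk.inj hij
    simp [c, ha, hb]
  · by_cases hj : j ∈ B <;> simp [hst i j hij, hAB i j hij, hj, mul_div_mul_left]

variable [Fintype n]

theorem PreservesRankOn.apply_ne_zero [Finite m] (hG : PreservesRankOn ρ G) {i : m} {j : n}
    (hij : (i, j) ∈ ρ) : G i j ≠ 0 := by
  classical
  have := Fintype.ofFinite m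
  intro h0
  have hrank := hG _ (single_mem_patternSpace hij 1)
  have hpos : (0 : Matrix m n K).rank < (0 + single i j (1 : K)).rank :=
    rank_lt_rank_add_single (w := 1) (u := 1) (zero_mulVec _) (vecMul_zero _) one_ne_zero
      one_ne_zero one_ne_zero
  rw [zero_add, ← hrank, hadamard_single, h0, zero_mul, single_zero] at hpos
  exact hpos.false

theorem PreservesRankOn.vecMulVec_units_hadamard [Finite m] (hG : PreservesRankOn ρ G) (s : m → Kˣ)
    (t : n → Kˣ) :
    PreservesRankOn ρ (vecMulVec (fun i => (s i : K)) (fun j => (t j : K)) ⊙ G) := fun X hX => by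
  rw [hadamard_assoc, rank_vecMulVec_units_hadamard, hG X hX]

theorem PreservesRankOn.apply_eq_one [Fintype m] [DecidableEq m] [DecidableEq n]
    (hG : PreservesRankOn ρ G) (hE : E ⊆ ρ) (hone : ∀ i j, (i, j) ∈ E → G i j = 1) {a : m}
    {b : n} (hab : (a, b) ∈ ρ) (hmarg : (Pi.single a 1, Pi.single b 1) ∈ patternMarginals K E) :
    G a b = 1 := by
  obtain ⟨Y, hY, hYmarg⟩ := hmarg
  let D := Y + single a b (-1)
  have hDmarg : marginals D = 0 := by
    simp [D, hYmarg, marginals_single, Pi.single_neg]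
  have hD : D ∈ patternSpace K ρ :=
    add_mem (patternSpace_mono hE hY) (single_mem_patternSpace hab (-1))
  have hGD : G ⊙ D = D + single a b (1 - G a b) := by
    rw [hadamard_add, hadamard_eq_self_of_mem_patternSpace hone hY, hadamard_single, add_assoc,
      ← single_add]
    congr 2
    ring
  by_contra hne
  have hlt : D.rank < (D + single a b (1 - G a b)).rank :=
    rank_lt_rank_add_single (congrArg Prod.fst hDmarg) (congrArg Prod.snd hDmarg) one_ne_zero
      one_ne_zero (sub_ne_zero.mpr (Ne.symm hne))
  rw [← hGD, hG D hD] at hlt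
  exact hlt.false

theorem PreservesRankOn.isTrivialOn_insert [Finite m] (hG : PreservesRankOn ρ G) (hE : E ⊆ ρ)
    (htriv : IsTrivialOn E G) {a : m} {b : n} (hab : (a, b) ∈ ρ) :
    IsTrivialOn (insert (a, b) E) G := by
  classical
  have := Fintype.ofFinite m
  by_cases hmarg : (Pi.single a 1, Pi.single b 1) ∈ patternMarginals K E
  · obtain ⟨s, t, hst⟩ := htriv
    refine ⟨s, t, ?_⟩
    rintro i j (hij | hij)
    · obtain ⟨rfl, rfl⟩ := Prod.mk.inj hij
      let H := vecMulVec (fun k => ((s⁻¹ k : Kˣ) : K)) (fun l => (t l : K)) ⊙ G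
      have hH_one (k : m) (l : n) : H k l = 1 ↔ G k l = s k / t l := by
        simp only [H, hadamard_apply, vecMulVec_apply, Pi.inv_apply, Units.val_inv_eq_inv_val]
        field_simp
      have hH : PreservesRankOn ρ H := hG.vecMulVec_units_hadamard s⁻¹ t
      exact (hH_one i j).mp <|
        hH.apply_eq_one hE (fun k l hkl => (hH_one k l).mpr (hst k l hkl)) hab hmarg
    · exact hst i j hij
  · obtain ⟨A, B, ha, hb, hAB⟩ := exists_separation_of_notMem_patternMarginals hmarg
    exact htriv.insert_of_separation (hG.apply_ne_zero hab) ha hb hAB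

theorem PreservesRankOn.isTrivialOn [Finite m] (hG : PreservesRankOn ρ G) : IsTrivialOn ρ G := by
  refine Set.Finite.induction_on_subset (motive := fun E _ => IsTrivialOn E G) ρ ρ.toFinite
    ⟨1, 1, fun _ _ h => h.elim⟩ ?_
  intro _ E hab hE _ htriv
  exact hG.isTrivialOn_insert hE htriv hab

end Multiplier

theorem stmt_17_general {ι K : Type*} [Fintype ι] [Field K] {ρ : Set (ι × ι)}
    (hρ : ∀ i, (i, i) ∈ ρ) {G : Matrix ι ι K} (hdiag : ∀ i, G i i = 1)
    (hrank : PreservesRankOn ρ G) :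
    ∃ s : ι → K, (∀ i, s i ≠ 0) ∧ ∀ i j, (i, j) ∈ ρ → G i j = s i / s j := by
  obtain ⟨s, t, hst⟩ := hrank.isTrivialOn
  have hst_eq (i : ι) : (s i : K) = t i := by
    rw [← div_eq_one_iff_eq (t i).ne_zero, ← hst i i (hρ i), hdiag i]
  exact ⟨fun i => s i, fun i => (s i).ne_zero, fun i j hij => by rw [hst i j hij, ← hst_eq j]⟩

theorem stmt_17 {n : ℕ} (ρ : Fin n → Fin n → Prop)
    (hρrefl : ∀ i, ρ i i) (hρtrans : ∀ i j k, ρ i j → ρ j k → ρ i k)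
    (Aρ : Set (Matrix (Fin n) (Fin n) ℂ))
    (hAρ : Aρ = {X | ∀ i j, X i j ≠ 0 → ρ i j})
    (g : Fin n → Fin n → ℂ)
    (hg0 : ∀ i j, ρ i j → g i j ≠ 0)
    (hgtrans : ∀ i j k, ρ i j → ρ j k → g i j * g j k = g i k)
    (hrank : ∀ X ∈ Aρ, (Matrix.of fun i j => g i j * X i j).rank = X.rank) :
    ∃ s : Fin n → ℂ, (∀ i, s i ≠ 0) ∧ ∀ i j, ρ i j → g i j = s i / s j := by
  subst hAρ
  have hdiag (i : Fin n) : g i i = 1 :=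
    (mul_eq_left₀ (hg0 i i (hρrefl i))).mp (hgtrans i i i (hρrefl i) (hρrefl i))
  exact stmt_17_general (ρ := {p | ρ p.1 p.2}) hρrefl hdiag hrank
end

section
/- Let A_ρ ⊆ M_n be a structural matrix algebra. A linear unital map φ : A_ρ → M_n preserves the rank of every matrix in A_ρ if and only if there exist an invertible matrix T ∈ M_n and a central idempotent P ∈ Z(A_ρ) such that φ(X) = T(PX + (I−P)X^t)T^{-1} for all X ∈ A_ρ. -/
open Matrix

/-!
A unital rank preserver `φ` sends the diagonal matrix units to rank-one matrices with sum `1`, which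
are simultaneously conjugate to the diagonal matrix units; so assume that `φ` fixes these. Since
`E i j + E i i` and `E i j + E j j` have rank one, `φ (E i j)` is then a nonzero multiple `C i j` of
`E i j` or of `E j i`, and testing `φ` on sums of two matrix units in a common row or column shows
that the choice is constant on the connected components of `ρ`. These choices define the central
idempotent `P`.

As partial transposition `X ↦ P X + (1 - P) Xᵀ` preserves rank, so does the Hadamard product with
`C`, and this forces `C i j = u i / u j`. Indeed, build such a factorization edge by edge in the
bipartite graph of `ρ` (rows against columns). A new edge joining two components is accommodated by
rescaling one of them. A new edge closing a cycle gives a matrix with zero row and column sums, and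
after rescaling the others to `C = 1`, changing its entry on the new edge would raise the rank. So
`φ` is partial transposition up to conjugation by a diagonal matrix.
-/

variable {R K m n : Type*} [Field K]

section Rank

variable [Fintype n]

theorem exists_eq_vecMulVec_of_rank_le_one {M : Matrix m n K} (hM : M.rank ≤ 1) :
    ∃ (u : m → K) (v : n → K), M = vecMulVec u v := by
  classical
  obtain ⟨⟨u, _⟩, hu⟩ := finrank_le_one_iff.1 hM
  choose v hv using fun j => hu ⟨M.mulVecLin (Pi.single j 1), LinearMap.mem_range_self _ _⟩
  refine ⟨u, v, ?_⟩
  ext i j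
  simpa [vecMulVec_apply, mul_comm] using (congrFun (congrArg Subtype.val (hv j)) i).symm

theorem mul_apply_comm_of_rank_le_one {M : Matrix m n K} (hM : M.rank ≤ 1) (i k : m) (j l : n) :
    M i j * M k l = M i l * M k j := by
  obtain ⟨u, v, rfl⟩ := exists_eq_vecMulVec_of_rank_le_one hM
  simp only [vecMulVec_apply]
  ring

theorem rank_lt_rank_of_ker_lt {M N : Matrix m n K}
    (h : LinearMap.ker N.mulVecLin < LinearMap.ker M.mulVecLin) : M.rank < N.rank := by
  have hM := M.mulVecLin.finrank_range_add_finrank_ker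
  have hN := N.mulVecLin.finrank_range_add_finrank_ker
  have := Submodule.finrank_lt_finrank_of_lt h
  unfold Matrix.rank
  lia

theorem rank_lt_rank_add_vecMulVec_s18 [Fintype m] {M : Matrix m n K} {w a : m → K} {z b : n → K}
    (hw : w ᵥ* M = 0) (hz : M *ᵥ z = 0) (hwa : w ⬝ᵥ a ≠ 0) (hbz : b ⬝ᵥ z ≠ 0) :
    M.rank < (M + vecMulVec a b).rank := by
  have hmul (x : n → K) : (M + vecMulVec a b) *ᵥ x = M *ᵥ x + (b ⬝ᵥ x) • a := by
    simp [add_mulVec, vecMulVec_mulVec]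
  refine rank_lt_rank_of_ker_lt (SetLike.lt_iff_le_and_exists.2 ⟨fun x hx => ?_, z, hz, ?_⟩)
  · rw [LinearMap.mem_ker, mulVecLin_apply, hmul] at hx
    have hbx : b ⬝ᵥ x = 0 := by
      have := congrArg (w ⬝ᵥ ·) hx
      simpa [dotProduct_mulVec, hw, hwa] using this
    simpa [hbx] using hx
  · rw [LinearMap.mem_ker, mulVecLin_apply, hmul, hz, zero_add]
    exact smul_ne_zero hbz fun ha => hwa (by simp [ha])

theorem rank_mul_add_rank_one_sub_mul [DecidableEq n] {P M : Matrix n n K}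
    (hP : IsIdempotentElem P) (hPM : Commute P M) :
    (P * M).rank + ((1 - P) * M).rank = M.rank := by
  have hdisj : Disjoint (LinearMap.range (P * M).mulVecLin)
      (LinearMap.range ((1 - P) * M).mulVecLin) := by
    rw [Submodule.disjoint_def]
    rintro _ ⟨x, rfl⟩ ⟨y, hy⟩
    calc (P * M) *ᵥ x = P *ᵥ ((P * M) *ᵥ x) := by rw [mulVec_mulVec, ← mul_assoc, hP.eq]
      _ = P *ᵥ (((1 - P) * M) *ᵥ y) := congrArg (P *ᵥ ·) hy.symm
      _ = 0 := by rw [mulVec_mulVec, ← mul_assoc, hP.mul_one_sub_self, zero_mul, zero_mulVec]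
  have hsup : LinearMap.range (P * M).mulVecLin ⊔ LinearMap.range ((1 - P) * M).mulVecLin =
      LinearMap.range M.mulVecLin := by
    refine le_antisymm (sup_le ?_ ?_) ?_
    · rw [hPM.eq, mulVecLin_mul]
      exact LinearMap.range_comp_le_range _ _
    · rw [((Commute.one_left M).sub_left hPM).eq, mulVecLin_mul]
      exact LinearMap.range_comp_le_range _ _
    · rintro _ ⟨x, rfl⟩
      refine Submodule.mem_sup.2 ⟨_, ⟨x, rfl⟩, _, ⟨x, rfl⟩, ?_⟩
      simp [sub_mul]
  have := Submodule.finrank_sup_add_finrank_inf_eq (LinearMap.range (P * M).mulVecLin)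
    (LinearMap.range ((1 - P) * M).mulVecLin)
  rw [hdisj.eq_bot, finrank_bot, add_zero, hsup] at this
  exact this.symm

theorem rank_conj_of_isUnit [CommRing R] [DecidableEq n] {T : Matrix n n R} (hT : IsUnit T)
    (X : Matrix n n R) : (T * X * T⁻¹).rank = X.rank := by
  have hTdet := (isUnit_iff_isUnit_det T).1 hT
  rw [rank_mul_eq_left_of_isUnit_det _ _ (isUnit_nonsing_inv_det T hTdet),
    rank_mul_eq_right_of_isUnit_det _ _ hTdet]

variable [DecidableEq m] [DecidableEq n]

theorem rank_single_one [Finite m] (i : m) (j : n) : (single i j 1 : Matrix m n K).rank = 1 := by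
  cases nonempty_fintype m
  rw [single_eq_single_vecMulVec_single]
  refine le_antisymm (rank_vecMulVec_le _ _) (Nat.succ_le_of_lt ?_)
  simpa using rank_lt_rank_add_vecMulVec_s18 (M := 0) (w := Pi.single i (1 : K)) (a := Pi.single i 1)
    (z := Pi.single j 1) (b := Pi.single j 1) (vecMul_zero _) (zero_mulVec _) (by simp) (by simp)

theorem rank_single_add_single_same_row_le_one (i : m) (j k : n) :
    (single i j 1 + single i k 1 : Matrix m n K).rank ≤ 1 := by
  simp only [single_eq_single_vecMulVec_single, ← vecMulVec_add]
  exact rank_vecMulVec_le _ _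

theorem rank_single_add_single_same_col_le_one (i k : m) (j : n) :
    (single i j 1 + single k j 1 : Matrix m n K).rank ≤ 1 := by
  simp only [single_eq_single_vecMulVec_single, ← add_vecMulVec]
  exact rank_vecMulVec_le _ _

theorem one_lt_rank_single_add_single {i k : m} {j l : n} {c d : K} (hik : i ≠ k) (hjl : j ≠ l)
    (hc : c ≠ 0) (hd : d ≠ 0) : 1 < (single i j c + single k l d).rank := by
  by_contra! h
  have := mul_apply_comm_of_rank_le_one h i k j l
  simp [single_apply, hik, hik.symm, hjl, hc, hd] at this

theorem apply_eq_zero_of_rank_add_single_le_one {M : Matrix m n K} {i : m} {j : n}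
    (hM : M.rank ≤ 1) (hM' : (M + single i j 1).rank ≤ 1) {a : m} {b : n} (ha : a ≠ i)
    (hb : b ≠ j) : M a b = 0 := by
  have h := mul_apply_comm_of_rank_le_one hM i a j b
  have h' := mul_apply_comm_of_rank_le_one hM' i a j b
  simp only [Matrix.add_apply, single_apply, ha.symm, hb.symm, and_true, and_false,
    and_self, ↓reduceIte, add_zero] at h'
  linear_combination h' - h

theorem exists_eq_single_or_eq_single_swap {M : Matrix n n K} {i j : n} (hij : i ≠ j)
    (hM : M.rank = 1) (hi : (M + single i i 1).rank ≤ 1) (hj : (M + single j j 1).rank ≤ 1) :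
    ∃ c ≠ 0, M = single i j c ∨ M = single j i c := by
  have hzero {a b : n} (hab : ¬(a = i ∧ b = j)) (hba : ¬(a = j ∧ b = i)) : M a b = 0 := by
    by_cases h : a ≠ i ∧ b ≠ i
    · exact apply_eq_zero_of_rank_add_single_le_one hM.le hi h.1 h.2
    · exact apply_eq_zero_of_rank_add_single_le_one hM.le hj (by grind) (by grind)
  have hM_eq : M = single i j (M i j) + single j i (M j i) := by
    ext a b
    rw [Matrix.add_apply, single_apply, single_apply]
    grind
  have hprod : M i j * M j i = 0 := by
    rw [mul_apply_comm_of_rank_le_one hM.le, hzero (by grind) (by grind), zero_mul]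
  have hM0 : M ≠ 0 := by
    rintro rfl
    simp at hM
  rcases mul_eq_zero.1 hprod with h | h <;> rw [h, single_zero] at hM_eq
  · rw [zero_add] at hM_eq
    exact ⟨M j i, fun h0 => hM0 (by rw [hM_eq, h0, single_zero]), .inr hM_eq⟩
  · rw [add_zero] at hM_eq
    exact ⟨M i j, fun h0 => hM0 (by rw [hM_eq, h0, single_zero]), .inl hM_eq⟩

theorem exists_isUnit_forall_eq_conj_single {M : n → Matrix n n K} (hM : ∀ i, (M i).rank ≤ 1)
    (hsum : ∑ i, M i = 1) : ∃ T : Matrix n n K, IsUnit T ∧ ∀ i, M i = T * single i i 1 * T⁻¹ := by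
  choose u v huv using fun i => exists_eq_vecMulVec_of_rank_le_one (hM i)
  have hmul : (of u)ᵀ * of v = 1 := by
    ext a b
    simp [← hsum, Matrix.sum_apply, huv, vecMulVec_apply, mul_apply]
  refine ⟨(of u)ᵀ, .of_mul_eq_one _ hmul, fun i => ?_⟩
  rw [inv_eq_right_inv hmul, huv]
  ext a b
  simp [mul_apply, single_apply, vecMulVec_apply, ite_and]

end Rank

section SupportedMatrices

variable [CommSemiring R]

variable (R) in
/-- The space of matrices whose nonzero entries all lie at positions related by `r`. For a
quasi-order `ρ` on `n` this is the structural matrix algebra `A_ρ`; only its linear structure is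
recorded, so that arbitrary (in particular rectangular) supports are covered. -/
def supportedMatrices (r : m → n → Prop) : Submodule R (Matrix m n R) where
  carrier := {X | ∀ i j, X i j ≠ 0 → r i j}
  add_mem' {X Y} hX hY i j hij := by
    by_cases h : X i j = 0
    · exact hY i j fun h' => hij (by simp [h, h'])
    · exact hX i j h
  zero_mem' i j h := absurd rfl h
  smul_mem' a X hX i j hij := hX i j (right_ne_zero_of_mul hij)

variable {r : m → n → Prop}

theorem supportedMatrices_mono {s : m → n → Prop} (h : ∀ i j, r i j → s i j) :
    supportedMatrices R r ≤ supportedMatrices R s :=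
  fun _ hX i j hij => h i j (hX i j hij)

theorem single_mem_supportedMatrices [DecidableEq m] [DecidableEq n] {i : m} {j : n} (hij : r i j)
    (c : R) : single i j c ∈ supportedMatrices R r := by
  intro a b hab
  obtain ⟨rfl, rfl⟩ : i = a ∧ j = b := by
    by_contra h
    exact hab (single_apply_of_ne _ _ _ _ _ h)
  exact hij

theorem diagonal_mem_supportedMatrices [DecidableEq n] {ρ : n → n → Prop} (hrefl : ∀ i, ρ i i)
    (d : n → R) : diagonal d ∈ supportedMatrices R ρ := by
  intro i j hij
  obtain rfl : i = j := by
    by_contra h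
    exact hij (diagonal_apply_ne d h)
  exact hrefl i

theorem hadamard_mem_supportedMatrices (C : Matrix m n R) {X : Matrix m n R}
    (hX : X ∈ supportedMatrices R r) : C ⊙ X ∈ supportedMatrices R r :=
  fun i j hij => hX i j (right_ne_zero_of_mul hij)

theorem map_eq_map_hadamard_of_forall_single [Finite m] [Finite n] [DecidableEq m]
    [DecidableEq n] {V : Type*} [AddCommMonoid V] [Module R V] {f g : Matrix m n R →ₗ[R] V}
    {C : Matrix m n R} (h : ∀ i j, r i j → f (single i j 1) = g (single i j (C i j)))
    {X : Matrix m n R} (hX : X ∈ supportedMatrices R r) : f X = g (C ⊙ X) := by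
  cases nonempty_fintype m
  cases nonempty_fintype n
  rw [matrix_eq_sum_single X, matrix_eq_sum_single (C ⊙ _)]
  simp only [map_sum]
  refine Finset.sum_congr rfl fun i _ => Finset.sum_congr rfl fun j _ => ?_
  rw [← matrix_eq_sum_single X]
  by_cases hij : X i j = 0
  · simp [hij]
  · calc f (single i j (X i j)) = X i j • f (single i j 1) := by
          rw [← map_smul, smul_single, smul_eq_mul, mul_one]
      _ = g (single i j ((C ⊙ X) i j)) := by
          rw [h i j (hX i j hij), ← map_smul, smul_single, smul_eq_mul, hadamard_apply, mul_comm]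

theorem diagonal_commute_of_mem_supportedMatrices [Fintype n] [DecidableEq n] {ρ : n → n → Prop}
    {d : n → R} (hd : ∀ i j, ρ i j → d i = d j) {X : Matrix n n R}
    (hX : X ∈ supportedMatrices R ρ) : Commute (diagonal d) X := by
  ext i j
  rw [diagonal_mul, mul_diagonal]
  by_cases h : X i j = 0
  · rw [h, mul_zero, zero_mul]
  · rw [hd i j (hX i j h), mul_comm]

theorem isDiag_of_forall_commute_supportedMatrices [Fintype n] {ρ : n → n → Prop}
    (hrefl : ∀ i, ρ i i) {P : Matrix n n R} (hP : ∀ X ∈ supportedMatrices R ρ, Commute P X) :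
    P.IsDiag := by
  classical
  intro i _ hij
  have hcomm := hP _ (single_mem_supportedMatrices (hrefl i) 1)
  exact row_eq_zero_of_commute_single hcomm.symm hij.symm

theorem hadamard_eq_diagonal_mul_mul_diagonal [Fintype m] [Fintype n]
    [DecidableEq m] [DecidableEq n] {C : Matrix m n R} {u : m → R} {v : n → R}
    (hC : ∀ i j, r i j → C i j = u i * v j) {X : Matrix m n R} (hX : X ∈ supportedMatrices R r) :
    C ⊙ X = diagonal u * X * diagonal v := by
  ext i j
  rw [hadamard_apply, mul_diagonal, diagonal_mul]
  by_cases h : X i j = 0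
  · simp [h]
  · rw [hC i j (hX i j h), mul_right_comm]

end SupportedMatrices

section HadamardCocycle

variable {r : m → n → Prop}

theorem exists_factorization_of_cut {C : Matrix m n K} {u : m → K} {v : n → K}
    (hu : ∀ i, u i ≠ 0) (hv : ∀ j, v j ≠ 0) (hC : ∀ i j, r i j → C i j = u i * v j) {A : Set m}
    {B : Set n} (hAB : ∀ i j, r i j → (i ∈ A ↔ j ∈ B)) {i₀ : m} {j₀ : n} (hi₀ : i₀ ∈ A)
    (hj₀ : j₀ ∉ B) (hC₀ : C i₀ j₀ ≠ 0) :
    ∃ (u' : m → K) (v' : n → K), (∀ i, u' i ≠ 0) ∧ (∀ j, v' j ≠ 0) ∧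
      C i₀ j₀ = u' i₀ * v' j₀ ∧ ∀ i j, r i j → C i j = u' i * v' j := by
  classical
  obtain ⟨d, hd, hCd⟩ : ∃ d ≠ 0, C i₀ j₀ = d * u i₀ * v j₀ :=
    ⟨C i₀ j₀ / (u i₀ * v j₀), div_ne_zero hC₀ (mul_ne_zero (hu _) (hv _)), by
      have := hu i₀
      have := hv j₀
      field_simp⟩
  refine ⟨fun i => if i ∈ A then d * u i else u i, fun j => if j ∈ B then d⁻¹ * v j else v j,
    fun i => ?_, fun j => ?_, by simp [hi₀, hj₀, hCd], fun i j hij => ?_⟩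
  · dsimp only
    split_ifs
    exacts [mul_ne_zero hd (hu i), hu i]
  · dsimp only
    split_ifs
    exacts [mul_ne_zero (inv_ne_zero hd) (hv j), hv j]
  · rw [hC i j hij]
    by_cases hj : j ∈ B
    · simp only [(hAB i j hij).2 hj, hj, ↓reduceIte]
      field_simp
    · simp only [mt (hAB i j hij).1 hj, hj, ↓reduceIte]

section

variable [Fintype m] [Fintype n] [DecidableEq m] [DecidableEq n]

/-- A path from `i₀` to `j₀` in the bipartite graph with edge set `r` is encoded by the alternating
sum `X` of its matrix units. -/
theorem exists_cut_or_exists_balanced (r : m → n → Prop) (i₀ : m) (j₀ : n) :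
    (∃ (A : Set m) (B : Set n), i₀ ∈ A ∧ j₀ ∉ B ∧ ∀ i j, r i j → (i ∈ A ↔ j ∈ B)) ∨
      ∃ X ∈ supportedMatrices K r,
        (X + single i₀ j₀ 1) *ᵥ 1 = 0 ∧ 1 ᵥ* (X + single i₀ j₀ 1) = 0 := by
  let A : Set m := {i | ∃ X ∈ supportedMatrices K r,
    X *ᵥ 1 = Pi.single i 1 - Pi.single i₀ 1 ∧ 1 ᵥ* X = 0}
  let B : Set n := {j | ∃ X ∈ supportedMatrices K r,
    X *ᵥ 1 = -Pi.single i₀ 1 ∧ 1 ᵥ* X = -Pi.single j 1}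
  have hrow (i : m) (j : n) : (single i j 1 : Matrix m n K) *ᵥ 1 = Pi.single i 1 := by
    simp [single_eq_single_vecMulVec_single, vecMulVec_mulVec]
  have hcol (i : m) (j : n) : 1 ᵥ* (single i j 1 : Matrix m n K) = Pi.single j 1 := by
    simp [single_eq_single_vecMulVec_single, vecMul_vecMulVec]
  by_cases hj₀ : j₀ ∈ B
  · obtain ⟨X, hX, hX_row, hX_col⟩ := hj₀
    refine .inr ⟨X, hX, ?_, ?_⟩
    · rw [add_mulVec, hX_row, hrow, neg_add_cancel]
    · rw [vecMul_add, hX_col, hcol, neg_add_cancel]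
  · refine .inl ⟨A, B, ⟨0, zero_mem _, by simp, by simp⟩, hj₀, fun i j hij => ⟨?_, ?_⟩⟩
    · rintro ⟨X, hX, hX_row, hX_col⟩
      refine ⟨X - single i j 1, sub_mem hX (single_mem_supportedMatrices hij 1), ?_, ?_⟩
      · rw [sub_mulVec, hX_row, hrow, sub_sub_cancel_left]
      · rw [vecMul_sub, hX_col, hcol, zero_sub]
    · rintro ⟨X, hX, hX_row, hX_col⟩
      refine ⟨X + single i j 1, add_mem hX (single_mem_supportedMatrices hij 1), ?_, ?_⟩
      · rw [add_mulVec, hX_row, hrow, neg_add_eq_sub]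
      · rw [vecMul_add, hX_col, hcol, neg_add_cancel]

theorem rank_lt_rank_add_single_s18 {X : Matrix m n K} (hrow : X *ᵥ 1 = 0) (hcol : 1 ᵥ* X = 0)
    (i : m) (j : n) {t : K} (ht : t ≠ 0) : X.rank < (X + single i j t).rank := by
  have hsingle : single i j t = vecMulVec (Pi.single i t) (Pi.single j 1) := by
    ext a b
    grind [vecMulVec_apply]
  rw [hsingle]
  exact rank_lt_rank_add_vecMulVec_s18 hcol hrow (by simpa) (by simp)

theorem rank_diagonal_mul_mul_diagonal {u : m → K} {v : n → K} (hu : ∀ i, u i ≠ 0)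
    (hv : ∀ j, v j ≠ 0) (X : Matrix m n K) : (diagonal u * X * diagonal v).rank = X.rank := by
  rw [rank_mul_eq_left_of_det_ne_zero, rank_mul_eq_right_of_det_ne_zero]
  · simpa [Finset.prod_ne_zero_iff]
  · simpa [Finset.prod_ne_zero_iff]

theorem apply_eq_mul_of_rank_hadamard_eq {C : Matrix m n K} {u : m → K} {v : n → K}
    (hu : ∀ i, u i ≠ 0) (hv : ∀ j, v j ≠ 0) (hC : ∀ i j, r i j → C i j = u i * v j) {i₀ : m}
    {j₀ : n} {X : Matrix m n K} (hX : X ∈ supportedMatrices K r)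
    (hrow : (X + single i₀ j₀ 1) *ᵥ 1 = 0) (hcol : 1 ᵥ* (X + single i₀ j₀ 1) = 0)
    (hrank : (C ⊙ (X + single i₀ j₀ 1)).rank = (X + single i₀ j₀ 1).rank) :
    C i₀ j₀ = u i₀ * v j₀ := by
  by_contra hne
  obtain ⟨t, ht⟩ : ∃ t, C i₀ j₀ = u i₀ * (1 + t) * v j₀ :=
    ⟨C i₀ j₀ / (u i₀ * v j₀) - 1, by field_simp [hu i₀, hv j₀]; ring⟩
  have ht0 : t ≠ 0 := fun h => hne (by rw [ht, h, add_zero, mul_one])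
  have hscale : C ⊙ (X + single i₀ j₀ 1) =
      diagonal u * (X + single i₀ j₀ 1 + single i₀ j₀ t) * diagonal v := by
    have hsingle : C ⊙ single i₀ j₀ 1 = diagonal u * single i₀ j₀ (1 + t) * diagonal v := by
      ext i j
      rw [hadamard_apply, mul_diagonal, diagonal_mul, single_apply, single_apply]
      split_ifs with h
      · obtain ⟨rfl, rfl⟩ := h
        rw [ht, mul_one]
      · simp
    rw [hadamard_add, hadamard_eq_diagonal_mul_mul_diagonal hC hX, hsingle, add_assoc X,
      ← single_add, Matrix.mul_add, Matrix.add_mul]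
  have hlt := rank_lt_rank_add_single_s18 hrow hcol i₀ j₀ ht0
  rw [← rank_diagonal_mul_mul_diagonal hu hv (_ + single i₀ j₀ t), ← hscale, hrank] at hlt
  exact hlt.false

end

theorem exists_factorization_of_rank_hadamard_eq_on_finset [Finite m] [Fintype n]
    {C : Matrix m n K} (S : Finset (m × n)) (hC : ∀ e ∈ S, C e.1 e.2 ≠ 0)
    (hrank : ∀ X ∈ supportedMatrices K (fun i j => (i, j) ∈ S), (C ⊙ X).rank = X.rank) :
    ∃ (u : m → K) (v : n → K), (∀ i, u i ≠ 0) ∧ (∀ j, v j ≠ 0) ∧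
      ∀ i j, (i, j) ∈ S → C i j = u i * v j := by
  classical
  cases nonempty_fintype m
  induction S using Finset.induction_on with
  | empty => exact ⟨1, 1, by simp, by simp, by simp⟩
  | insert e S _ ih =>
    obtain ⟨i₀, j₀⟩ := e
    have hle : supportedMatrices K (fun i j => (i, j) ∈ S) ≤
        supportedMatrices K (fun i j => (i, j) ∈ insert (i₀, j₀) S) :=
      supportedMatrices_mono fun _ _ => Finset.mem_insert_of_mem
    obtain ⟨u, v, hu, hv, huv⟩ := ih (fun e he => hC e (Finset.mem_insert_of_mem he))
      fun X hX => hrank X (hle hX)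
    obtain ⟨u', v', hu', hv', h₀, huv'⟩ : ∃ (u' : m → K) (v' : n → K), (∀ i, u' i ≠ 0) ∧
        (∀ j, v' j ≠ 0) ∧ C i₀ j₀ = u' i₀ * v' j₀ ∧ ∀ i j, (i, j) ∈ S → C i j = u' i * v' j := by
      rcases exists_cut_or_exists_balanced (K := K) (fun i j => (i, j) ∈ S) i₀ j₀ with
        ⟨A, B, hi₀, hj₀, hAB⟩ | ⟨X, hX, hrow, hcol⟩
      · exact exists_factorization_of_cut hu hv huv hAB hi₀ hj₀ (hC _ (Finset.mem_insert_self _ _))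
      · have hmem := add_mem (hle hX) (single_mem_supportedMatrices
          (r := fun i j => (i, j) ∈ insert (i₀, j₀) S) (Finset.mem_insert_self _ _) (1 : K))
        exact ⟨u, v, hu, hv,
          apply_eq_mul_of_rank_hadamard_eq hu hv huv hX hrow hcol (hrank _ hmem), huv⟩
    refine ⟨u', v', hu', hv', fun i j hij => ?_⟩
    rcases Finset.mem_insert.1 hij with h | h
    · obtain ⟨rfl, rfl⟩ := Prod.mk.inj h
      exact h₀
    · exact huv' i j h

theorem exists_factorization_of_rank_hadamard_eq [Finite m] [Fintype n] {C : Matrix m n K}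
    (hC : ∀ i j, r i j → C i j ≠ 0)
    (hrank : ∀ X ∈ supportedMatrices K r, (C ⊙ X).rank = X.rank) :
    ∃ (u : m → K) (v : n → K), (∀ i, u i ≠ 0) ∧ (∀ j, v j ≠ 0) ∧
      ∀ i j, r i j → C i j = u i * v j := by
  classical
  cases nonempty_fintype m
  have := exists_factorization_of_rank_hadamard_eq_on_finset (C := C)
    (Finset.univ.filter fun e : m × n => r e.1 e.2)
  simpa using this (by simpa using hC) (by simpa using hrank)

end HadamardCocycle

section PartialTranspose

variable [CommRing R] [Fintype n] [DecidableEq n]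

/-- The map `X ↦ P X + (1 - P) Xᵀ`. For a central idempotent `P` of a structural matrix algebra it
transposes the diagonal blocks annihilated by `P` and fixes the others. -/
def partialTranspose (P : Matrix n n R) : Matrix n n R →ₗ[R] Matrix n n R :=
  LinearMap.mulLeft R P + LinearMap.mulLeft R (1 - P) ∘ₗ (transposeLinearEquiv n n R R).toLinearMap

theorem partialTranspose_apply (P X : Matrix n n R) :
    partialTranspose P X = P * X + (1 - P) * Xᵀ :=
  rfl

theorem partialTranspose_diagonal_apply (p : n → R) (X : Matrix n n R) (i j : n) :
    partialTranspose (diagonal p) X i j = p i * X i j + (1 - p i) * X j i := by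
  rw [partialTranspose_apply, ← diagonal_one, diagonal_sub, Matrix.add_apply, diagonal_mul,
    diagonal_mul, transpose_apply]

theorem partialTranspose_diagonal_single {p : n → R} {i j : n} (hp : p i = p j) (c : R) :
    partialTranspose (diagonal p) (single i j c) =
      p i • single i j c + (1 - p i) • single j i c := by
  ext a b
  simp only [partialTranspose_diagonal_apply, Matrix.add_apply, Matrix.smul_apply, smul_eq_mul,
    single_apply]
  grind

theorem rank_partialTranspose {P X : Matrix n n K} (hP : IsIdempotentElem P) (hPt : Pᵀ = P)
    (hPX : Commute P X) : (partialTranspose P X).rank = X.rank := by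
  have hPXt : Commute P Xᵀ := by
    have := congrArg transpose hPX.eq
    rw [transpose_mul, transpose_mul, hPt] at this
    exact this.symm
  have hQ : Commute P (1 - P) := (Commute.one_right P).sub_right (.refl P)
  have hcomm : Commute P (partialTranspose P X) :=
    ((Commute.refl P).mul_right hPX).add_right (hQ.mul_right hPXt)
  have hleft : P * partialTranspose P X = P * X := by
    rw [partialTranspose_apply, mul_add, ← mul_assoc, ← mul_assoc, hP.eq, hP.mul_one_sub_self,
      zero_mul, add_zero]
  have hright : (1 - P) * partialTranspose P X = ((1 - P) * X)ᵀ := by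
    rw [partialTranspose_apply, mul_add, ← mul_assoc, ← mul_assoc, hP.one_sub.eq,
      hP.one_sub_mul_self, zero_mul, zero_add, transpose_mul, transpose_sub, transpose_one, hPt,
      ((Commute.one_left Xᵀ).sub_left hPXt).eq]
  rw [← rank_mul_add_rank_one_sub_mul hP hcomm, hleft, hright, rank_transpose,
    rank_mul_add_rank_one_sub_mul hP hPX]

end PartialTranspose

section Orientation

theorem exists_forall_iff_of_coherent {V : Type*} {ρ F : V → V → Prop}
    (htrans : ∀ i j k, ρ i j → ρ j k → ρ i k)
    (hrow : ∀ i j k, ρ i j → ρ i k → i ≠ j → i ≠ k → F i j → F i k)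
    (hcol : ∀ i j k, ρ i k → ρ j k → i ≠ k → j ≠ k → F i k → F j k)
    (hsymm : ∀ i j, ρ i j → ρ j i → i ≠ j → F i j → F j i) :
    ∃ f : V → Prop, ∀ i j, ρ i j → i ≠ j → (f i ↔ F i j) ∧ (f j ↔ F i j) := by
  have hchain {i j k : V} (hij : ρ i j) (hjk : ρ j k) (hne : i ≠ j) (hne' : j ≠ k) :
      F i j ↔ F j k := by
    by_cases hik : i = k
    · subst hik
      exact ⟨hsymm i j hij hjk hne, hsymm j i hjk hij hne'⟩
    · have hρ := htrans i j k hij hjk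
      exact ⟨fun h => hcol i j k hρ hjk hik hne' (hrow i j k hij hρ hne hik h),
        fun h => hrow i k j hρ hij hik hne (hcol j i k hjk hρ hne' hik h)⟩
  refine ⟨fun i => ∃ j ≠ i, ρ i j ∧ F i j ∨ ρ j i ∧ F j i, fun i j hij hne => ⟨⟨?_, ?_⟩, ⟨?_, ?_⟩⟩⟩
  · rintro ⟨k, hk, ⟨hρ, hF⟩ | ⟨hρ, hF⟩⟩
    · exact hrow i k j hρ hij hk.symm hne hF
    · exact (hchain hρ hij hk hne).1 hF
  · exact fun hF => ⟨j, hne.symm, .inl ⟨hij, hF⟩⟩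
  · rintro ⟨k, hk, ⟨hρ, hF⟩ | ⟨hρ, hF⟩⟩
    · exact (hchain hij hρ hne hk.symm).2 hF
    · exact hcol k i j hρ hij hk hne hF
  · exact fun hF => ⟨i, hne, .inr ⟨hij, hF⟩⟩

end Orientation

section RankPreservers

variable [Fintype n] [DecidableEq n] {ρ : n → n → Prop} {ψ : Matrix n n K →ₗ[K] Matrix n n K}

/-- `ψ` sends the matrix unit at `(i, j)` to a nonzero multiple of the one at `(j, i)`. -/
def IsFlipped (ψ : Matrix n n K →ₗ[K] Matrix n n K) (i j : n) : Prop :=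
  ∃ c ≠ 0, ψ (single i j 1) = single j i c

theorem exists_map_single_eq_or_isFlipped (hrefl : ∀ i, ρ i i)
    (hψ : ∀ X ∈ supportedMatrices K ρ, (ψ X).rank = X.rank)
    (hψd : ∀ i, ψ (single i i 1) = single i i 1) {i j : n} (hij : ρ i j) (hne : i ≠ j) :
    (∃ c ≠ 0, ψ (single i j 1) = single i j c) ∨ IsFlipped ψ i j := by
  have hmem {a b : n} (hab : ρ a b) := single_mem_supportedMatrices hab (1 : K)
  have hrank : (ψ (single i j 1)).rank = 1 := (hψ _ (hmem hij)).trans (rank_single_one i j)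
  have hi : (ψ (single i j 1) + single i i 1).rank ≤ 1 := by
    rw [← hψd i, ← map_add, hψ _ (add_mem (hmem hij) (hmem (hrefl i)))]
    exact rank_single_add_single_same_row_le_one i j i
  have hj : (ψ (single i j 1) + single j j 1).rank ≤ 1 := by
    rw [← hψd j, ← map_add, hψ _ (add_mem (hmem hij) (hmem (hrefl j)))]
    exact rank_single_add_single_same_col_le_one i j j
  obtain ⟨c, hc, h | h⟩ := exists_eq_single_or_eq_single_swap hne hrank hi hj
  exacts [.inl ⟨c, hc, h⟩, .inr ⟨c, hc, h⟩]

theorem IsFlipped.of_same_row (hrefl : ∀ i, ρ i i)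
    (hψ : ∀ X ∈ supportedMatrices K ρ, (ψ X).rank = X.rank)
    (hψd : ∀ i, ψ (single i i 1) = single i i 1) {i j k : n} (hij : ρ i j) (hik : ρ i k)
    (hnj : i ≠ j) (hnk : i ≠ k) (h : IsFlipped ψ i j) : IsFlipped ψ i k := by
  refine (exists_map_single_eq_or_isFlipped hrefl hψ hψd hik hnk).resolve_left ?_
  rintro ⟨d, hd, hkd⟩
  obtain ⟨c, hc, hjc⟩ := h
  have hlt := one_lt_rank_single_add_single hnj.symm hnk hc hd
  rw [← hjc, ← hkd, ← map_add, hψ _ (add_mem (single_mem_supportedMatrices hij 1)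
    (single_mem_supportedMatrices hik 1))] at hlt
  exact hlt.not_ge (rank_single_add_single_same_row_le_one i j k)

theorem IsFlipped.of_same_col (hrefl : ∀ i, ρ i i)
    (hψ : ∀ X ∈ supportedMatrices K ρ, (ψ X).rank = X.rank)
    (hψd : ∀ i, ψ (single i i 1) = single i i 1) {i j k : n} (hik : ρ i k) (hjk : ρ j k)
    (hni : i ≠ k) (hnj : j ≠ k) (h : IsFlipped ψ i k) : IsFlipped ψ j k := by
  refine (exists_map_single_eq_or_isFlipped hrefl hψ hψd hjk hnj).resolve_left ?_
  rintro ⟨d, hd, hjd⟩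
  obtain ⟨c, hc, hic⟩ := h
  have hlt := one_lt_rank_single_add_single hnj.symm hni hc hd
  rw [← hic, ← hjd, ← map_add, hψ _ (add_mem (single_mem_supportedMatrices hik 1)
    (single_mem_supportedMatrices hjk 1))] at hlt
  exact hlt.not_ge (rank_single_add_single_same_col_le_one i j k)

theorem IsFlipped.symm (hrefl : ∀ i, ρ i i)
    (hψ : ∀ X ∈ supportedMatrices K ρ, (ψ X).rank = X.rank)
    (hψd : ∀ i, ψ (single i i 1) = single i i 1) {i j : n} (hij : ρ i j) (hji : ρ j i)
    (hne : i ≠ j) (h : IsFlipped ψ i j) : IsFlipped ψ j i := by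
  refine (exists_map_single_eq_or_isFlipped hrefl hψ hψd hji hne.symm).resolve_left ?_
  rintro ⟨d, -, hjd⟩
  obtain ⟨c, -, hic⟩ := h
  -- The all-ones matrix on the indices `i, j` has rank one, but were only one of its two
  -- off-diagonal entries flipped, the image would contain an invertible triangular block.
  let v : n → K := Pi.single i 1 + Pi.single j 1
  have hv : vecMulVec v v =
      single i i 1 + single j i 1 + (single i j 1 + single j j 1) := by
    simp only [v, vecMulVec_add, add_vecMulVec, ← single_eq_single_vecMulVec_single]
  have hmem : vecMulVec v v ∈ supportedMatrices K ρ := by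
    rw [hv]
    exact add_mem (add_mem (single_mem_supportedMatrices (hrefl i) 1)
      (single_mem_supportedMatrices hji 1)) (add_mem (single_mem_supportedMatrices hij 1)
      (single_mem_supportedMatrices (hrefl j) 1))
  have hle : (ψ (vecMulVec v v)).rank ≤ 1 := (hψ _ hmem).trans_le (rank_vecMulVec_le v v)
  have hminor := mul_apply_comm_of_rank_le_one hle i j i j
  simp [hv, hψd, hic, hjd, hne, hne.symm] at hminor

theorem exists_map_single_eq_partialTranspose (hrefl : ∀ i, ρ i i)
    (htrans : ∀ i j k, ρ i j → ρ j k → ρ i k)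
    (hψ : ∀ X ∈ supportedMatrices K ρ, (ψ X).rank = X.rank)
    (hψd : ∀ i, ψ (single i i 1) = single i i 1) :
    ∃ p : n → K, IsIdempotentElem p ∧ (∀ i j, ρ i j → p i = p j) ∧
      ∀ i j, ρ i j → ∃ c ≠ 0, ψ (single i j 1) = partialTranspose (diagonal p) (single i j c) := by
  classical
  obtain ⟨f, hf⟩ := exists_forall_iff_of_coherent (ρ := ρ) (F := IsFlipped ψ) htrans
    (fun _ _ _ => .of_same_row hrefl hψ hψd) (fun _ _ _ => .of_same_col hrefl hψ hψd)
    (fun _ _ => .symm hrefl hψ hψd)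
  have hfρ {i j : n} (hij : ρ i j) : f i ↔ f j := by
    by_cases hne : i = j
    · rw [hne]
    · exact (hf i j hij hne).1.trans (hf i j hij hne).2.symm
  set p : n → K := fun i => if f i then 0 else 1 with hp
  have hp_idem : IsIdempotentElem p := by
    ext i
    by_cases h : f i <;> simp [hp, h]
  have hpρ (i j : n) (hij : ρ i j) : p i = p j := by simp only [hp, hfρ hij]
  refine ⟨p, hp_idem, hpρ, fun i j hij => ?_⟩
  simp only [partialTranspose_diagonal_single (hpρ i j hij)]
  by_cases hne : i = j
  · subst hne
    exact ⟨1, one_ne_zero, by rw [hψd, ← add_smul, add_sub_cancel, one_smul]⟩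
  by_cases hi : f i
  · have hpi : p i = 0 := if_pos hi
    simp only [hpi, zero_smul, zero_add, sub_zero, one_smul]
    exact (hf i j hij hne).1.1 hi
  · have hpi : p i = 1 := if_neg hi
    simp only [hpi, one_smul, sub_self, zero_smul, add_zero]
    exact (exists_map_single_eq_or_isFlipped hrefl hψ hψd hij hne).resolve_right
      (mt (hf i j hij hne).1.2 hi)

theorem exists_partialTranspose_diagonal_conj {p u : n → K} (hp : IsIdempotentElem p)
    (hpρ : ∀ i j, ρ i j → p i = p j) (hu : ∀ i, u i ≠ 0) :
    ∃ Q : Matrix n n K, IsUnit Q ∧ ∀ X ∈ supportedMatrices K ρ,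
      partialTranspose (diagonal p) (diagonal u * X * diagonal u⁻¹) =
        Q * partialTranspose (diagonal p) X * Q⁻¹ := by
  classical
  set q : n → K := fun i => if p i = 0 then (u i)⁻¹ else u i with hq
  have hmul : diagonal q * diagonal q⁻¹ = 1 := by
    rw [diagonal_mul_diagonal, ← diagonal_one]
    congr 1
    ext i
    exact mul_inv_cancel₀ (by simp only [hq]; split_ifs <;> simp [hu])
  refine ⟨diagonal q, .of_mul_eq_one _ hmul, fun X hX => ?_⟩
  rw [inv_eq_right_inv hmul]
  ext i j
  simp only [partialTranspose_diagonal_apply, mul_diagonal, diagonal_mul, Pi.inv_apply]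
  rcases IsIdempotentElem.iff_eq_zero_or_one.1 (congrFun hp i) with hi | hi
  · by_cases hji : X j i = 0
    · simp [hi, hji]
    · have hj : p j = 0 := (hpρ j i (hX j i hji)).trans hi
      simp only [hq, hi, hj, ↓reduceIte, inv_inv]
      ring
  · by_cases hij : X i j = 0
    · simp [hi, hij]
    · have hj : p j = 1 := (hpρ i j (hX i j hij)).symm.trans hi
      simp only [hq, hi, hj, one_ne_zero, ↓reduceIte]
      ring

theorem exists_eq_conj_partialTranspose_of_map_single_self (hrefl : ∀ i, ρ i i)
    (htrans : ∀ i j k, ρ i j → ρ j k → ρ i k)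
    (hψ : ∀ X ∈ supportedMatrices K ρ, (ψ X).rank = X.rank)
    (hψd : ∀ i, ψ (single i i 1) = single i i 1) :
    ∃ (Q : Matrix n n K) (p : n → K), IsUnit Q ∧ IsIdempotentElem p ∧
      (∀ i j, ρ i j → p i = p j) ∧
      ∀ X ∈ supportedMatrices K ρ, ψ X = Q * partialTranspose (diagonal p) X * Q⁻¹ := by
  obtain ⟨p, hp, hpρ, hsingle⟩ := exists_map_single_eq_partialTranspose hrefl htrans hψ hψd
  choose! C hC hψC using hsingle
  have hP : IsIdempotentElem (diagonal p) := hp.map (diagonalRingHom n K)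
  have hψ_eq {X : Matrix n n K} (hX : X ∈ supportedMatrices K ρ) :
      ψ X = partialTranspose (diagonal p) (of C ⊙ X) :=
    map_eq_map_hadamard_of_forall_single (C := of C) hψC hX
  have hrank (X : Matrix n n K) (hX : X ∈ supportedMatrices K ρ) :
      (of C ⊙ X).rank = X.rank := by
    rw [← hψ X hX, hψ_eq hX, rank_partialTranspose hP (diagonal_transpose p)
      (diagonal_commute_of_mem_supportedMatrices hpρ (hadamard_mem_supportedMatrices _ hX))]
  obtain ⟨u, v, hu, -, huv⟩ := exists_factorization_of_rank_hadamard_eq (C := of C) hC hrank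
  have hC_diag (i : n) : C i i = 1 := by
    have := congrFun₂ ((hψd i).symm.trans (hψC i i (hrefl i))) i i
    rw [partialTranspose_diagonal_apply, single_apply_same, single_apply_same] at this
    linear_combination -this
  have hv : v = u⁻¹ := by
    ext i
    exact eq_inv_of_mul_eq_one_right ((huv i i (hrefl i)).symm.trans (hC_diag i))
  obtain ⟨Q, hQ, hconj⟩ := exists_partialTranspose_diagonal_conj hp hpρ hu
  refine ⟨Q, p, hQ, hp, hpρ, fun X hX => ?_⟩
  rw [hψ_eq hX, hadamard_eq_diagonal_mul_mul_diagonal huv hX, hv, hconj X hX]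

theorem exists_map_eq_conj_partialTranspose {φ : Matrix n n K →ₗ[K] Matrix n n K}
    (hrefl : ∀ i, ρ i i) (htrans : ∀ i j k, ρ i j → ρ j k → ρ i k) (hφ : φ 1 = 1)
    (hrank : ∀ X ∈ supportedMatrices K ρ, (φ X).rank = X.rank) :
    ∃ (T : Matrix n n K) (p : n → K), IsUnit T ∧ IsIdempotentElem p ∧
      (∀ i j, ρ i j → p i = p j) ∧
      ∀ X ∈ supportedMatrices K ρ, φ X = T * partialTranspose (diagonal p) X * T⁻¹ := by
  have hdiag (i : n) : (φ (single i i 1)).rank ≤ 1 :=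
    ((hrank _ (single_mem_supportedMatrices (hrefl i) 1)).trans (rank_single_one i i)).le
  have hsum : ∑ i, φ (single i i 1) = 1 := by rw [← map_sum, sum_single_one, hφ]
  obtain ⟨S, hS, hφS⟩ := exists_isUnit_forall_eq_conj_single hdiag hsum
  have hSdet := (isUnit_iff_isUnit_det S).1 hS
  let ψ : Matrix n n K →ₗ[K] Matrix n n K :=
    LinearMap.mulLeft K S⁻¹ ∘ₗ LinearMap.mulRight K S ∘ₗ φ
  have hψ_apply (X : Matrix n n K) : ψ X = S⁻¹ * φ X * S := (mul_assoc _ _ _).symm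
  have hφ_eq (X : Matrix n n K) : φ X = S * ψ X * S⁻¹ := by
    rw [hψ_apply, mul_assoc S⁻¹, mul_nonsing_inv_cancel_left _ _ hSdet,
      mul_nonsing_inv_cancel_right _ _ hSdet]
  have hψd (i : n) : ψ (single i i 1) = single i i 1 := by
    rw [hψ_apply, hφS, mul_assoc S, nonsing_inv_mul_cancel_left _ _ hSdet,
      nonsing_inv_mul_cancel_right _ _ hSdet]
  have hψ (X : Matrix n n K) (hX : X ∈ supportedMatrices K ρ) : (ψ X).rank = X.rank := by
    rw [← hrank X hX, hφ_eq, rank_conj_of_isUnit hS]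
  obtain ⟨Q, p, hQ, hp, hpρ, hψQ⟩ :=
    exists_eq_conj_partialTranspose_of_map_single_self hrefl htrans hψ hψd
  refine ⟨S * Q, p, hS.mul hQ, hp, hpρ, fun X hX => ?_⟩
  rw [hφ_eq, hψQ X hX, Matrix.mul_inv_rev]
  simp only [mul_assoc]

end RankPreservers

theorem stmt_18_general [Fintype n] [DecidableEq n] {ρ : n → n → Prop} (hrefl : ∀ i, ρ i i)
    (htrans : ∀ i j k, ρ i j → ρ j k → ρ i k) {φ : Matrix n n K →ₗ[K] Matrix n n K}
    (hφ : φ 1 = 1) :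
    (∀ X ∈ supportedMatrices K ρ, (φ X).rank = X.rank) ↔
      ∃ T P : Matrix n n K, IsUnit T ∧ P ∈ supportedMatrices K ρ ∧ P * P = P ∧
        (∀ X ∈ supportedMatrices K ρ, Commute P X) ∧
        ∀ X ∈ supportedMatrices K ρ, φ X = T * (P * X + (1 - P) * Xᵀ) * T⁻¹ := by
  constructor
  · intro hrank
    obtain ⟨T, p, hT, hp, hpρ, hφT⟩ := exists_map_eq_conj_partialTranspose hrefl htrans hφ hrank
    exact ⟨T, diagonal p, hT, diagonal_mem_supportedMatrices hrefl p,
      hp.map (diagonalRingHom n K),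
      fun X hX => diagonal_commute_of_mem_supportedMatrices hpρ hX, hφT⟩
  · rintro ⟨T, P, hT, -, hP, hcomm, hφT⟩ X hX
    have hPt : Pᵀ = P := (isDiag_of_forall_commute_supportedMatrices hrefl hcomm).isSymm
    rw [hφT X hX, rank_conj_of_isUnit hT]
    exact rank_partialTranspose hP hPt (hcomm X hX)

theorem stmt_18 {n : ℕ} (ρ : Fin n → Fin n → Prop)
    (hρrefl : ∀ i, ρ i i) (hρtrans : ∀ i j k, ρ i j → ρ j k → ρ i k)
    (Aρ : Set (Matrix (Fin n) (Fin n) ℂ))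
    (hAρ : Aρ = {X | ∀ i j, X i j ≠ 0 → ρ i j})
    (φ : Matrix (Fin n) (Fin n) ℂ →ₗ[ℂ] Matrix (Fin n) (Fin n) ℂ)
    (hunital : φ 1 = 1) :
    (∀ X ∈ Aρ, (φ X).rank = X.rank) ↔
      ∃ T P : Matrix (Fin n) (Fin n) ℂ, IsUnit T ∧
        P ∈ Aρ ∧ P * P = P ∧ (∀ X ∈ Aρ, Commute P X) ∧
        ∀ X ∈ Aρ, φ X = T * (P * X + (1 - P) * Xᵀ) * T⁻¹ := by
  subst hAρ
  exact stmt_18_general hρrefl hρtrans hunital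
end
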